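/- For every positive integer n there exists a positive integer N = N(n) such that for every coloring χ : {1, 2, …, N} → Fin n there exist positive integers x and y with x ≤ N, x + y ≤ N, and x·y ≤ N such that χ(x) = χ(x + y) = χ(x·y). -/

import Mathlib

open Filter

/-- A sequence of colorings with finitely many colors has a pointwise limit along the
hyperfilter. -/
theorem exists_eventually_eq_hyperfilter {α κ : Type*} [Finite κ] (c : ℕ → α → κ) :
    ∃ d : α → κ, ∀ x, ∀ᶠ N in (hyperfilter ℕ : Filter ℕ), c N x = d x := by
  have h : ∀ x, ∃ k, ∀ᶠ N in (hyperfilter ℕ : Filter ℕ), c N x = k := fun x =>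
    Ultrafilter.eventually_exists_iff.1 (Eventually.of_forall fun N => ⟨c N x, rfl⟩)
  choose d hd using h
  exact ⟨d, hd⟩

theorem eventually_hyperfilter_ge (m : ℕ) : ∀ᶠ N in (hyperfilter ℕ : Filter ℕ), m ≤ N :=
  Nat.hyperfilter_le_atTop (eventually_ge_atTop m)

/-- Finitary van der Waerden theorem for homothetic copies of a finite set. -/
theorem exists_bounded_mono_homothetic_copy (κ : Type*) [Finite κ] (S : Finset ℕ) :
    ∃ W : ℕ, ∀ c : ℕ → κ, ∃ a ∈ Finset.Icc 1 W, ∃ b ≤ W, ∃ k, ∀ s ∈ S, c (a * s + b) = k := by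
  by_contra! h
  choose c hc using h
  obtain ⟨d, hd⟩ := exists_eventually_eq_hyperfilter c
  obtain ⟨a, ha, b, k, hk⟩ := Combinatorics.exists_mono_homothetic_copy S d
  have hS : ∀ᶠ N in (hyperfilter ℕ : Filter ℕ), ∀ s ∈ S, c N (a * s + b) = d (a * s + b) :=
    (eventually_all_finset S).2 fun s _ => hd _
  obtain ⟨N, hN, haN, hbN⟩ :=
    (hS.and ((eventually_hyperfilter_ge a).and (eventually_hyperfilter_ge b))).exists
  obtain ⟨s, hs, hne⟩ := hc N a (Finset.mem_Icc.2 ⟨ha, haN⟩) b hbN k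
  exact hne ((hN s hs).trans (hk s hs))

/-- A set of natural numbers is piecewise syndetic if it has bounded gaps on arbitrarily long
intervals. -/
def PiecewiseSyndetic (B : Set ℕ) : Prop :=
  ∃ k, ∀ L, ∃ a, ∀ x, a ≤ x → x ≤ a + L → ∃ f ≤ k, x + f ∈ B

namespace PiecewiseSyndetic

theorem univ : PiecewiseSyndetic Set.univ :=
  ⟨0, fun _ => ⟨0, fun _ _ _ => ⟨0, le_rfl, trivial⟩⟩⟩

theorem exists_pos_mem {B : Set ℕ} (h : PiecewiseSyndetic B) : ∃ z ∈ B, 0 < z := by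
  obtain ⟨k, hk⟩ := h
  obtain ⟨a, ha⟩ := hk 1
  obtain ⟨f, -, hf⟩ := ha (a + 1) (by omega) le_rfl
  exact ⟨_, hf, by omega⟩

theorem or_of_union {A B : Set ℕ} (h : PiecewiseSyndetic (A ∪ B)) :
    PiecewiseSyndetic A ∨ PiecewiseSyndetic B := by
  obtain ⟨k, hk⟩ := h
  refine or_iff_not_imp_left.2 fun hA => ?_
  simp only [PiecewiseSyndetic, not_exists, not_forall] at hA
  obtain ⟨M, hM⟩ := hA k
  refine ⟨M + k, fun L => ?_⟩
  obtain ⟨a, ha⟩ := hk (L + M)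
  refine ⟨a, fun x hax hxL => ?_⟩
  obtain ⟨x', h1, h2, h3⟩ := hM x
  obtain ⟨f, hf, hmem⟩ := ha x' (by omega) (by omega)
  rcases hmem with hmem | hmem
  · exact absurd ⟨hf, hmem⟩ (h3 f)
  · refine ⟨x' - x + f, by omega, ?_⟩
    rwa [show x + (x' - x + f) = x' + f by omega]

theorem exists_of_biUnion {ι : Type*} (s : Finset ι) (B : ι → Set ℕ)
    (h : PiecewiseSyndetic (⋃ i ∈ s, B i)) : ∃ i ∈ s, PiecewiseSyndetic (B i) := by
  classical
  induction s using Finset.induction_on with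
  | empty =>
    obtain ⟨z, hz, -⟩ := h.exists_pos_mem
    simp at hz
  | insert i s _ ih =>
    rw [Finset.set_biUnion_insert] at h
    rcases h.or_of_union with h | h
    · exact ⟨i, Finset.mem_insert_self _ _, h⟩
    · obtain ⟨j, hj, hB⟩ := ih h
      exact ⟨j, Finset.mem_insert_of_mem hj, hB⟩

theorem image_mul {B : Set ℕ} (h : PiecewiseSyndetic B) {y : ℕ} (hy : 0 < y) :
    PiecewiseSyndetic ((y * ·) '' B) := by
  obtain ⟨k, hk⟩ := h
  refine ⟨y * (k + 1), fun L => ?_⟩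
  obtain ⟨a, ha⟩ := hk (L + 1)
  refine ⟨y * a, fun x hax hxL => ?_⟩
  have hdiv := Nat.div_add_mod x y
  have hmod := Nat.mod_lt x hy
  have h1 : a ≤ x / y := (Nat.le_div_iff_mul_le hy).2 (by rwa [mul_comm])
  have h2 : x / y ≤ a + L := by
    refine Nat.div_le_of_le_mul (hxL.trans ?_)
    nlinarith
  obtain ⟨f, hf, hmem⟩ := ha (x / y + 1) (by omega) (by omega)
  have hyf : y * f ≤ y * k := Nat.mul_le_mul_left y hf
  refine ⟨y * (f + 1) - x % y, ?_, x / y + 1 + f, hmem, ?_⟩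
  · rw [mul_add, mul_add]
    omega
  · simp only [mul_add, mul_one]
    omega

theorem exists_homothetic {B : Set ℕ} (h : PiecewiseSyndetic B) (S : Finset ℕ) :
    ∃ y, 0 < y ∧ PiecewiseSyndetic {d | ∀ s ∈ S, d + y * s ∈ B} := by
  obtain ⟨k, hk⟩ := h
  obtain ⟨W, hW⟩ := exists_bounded_mono_homothetic_copy (Fin (k + 1)) S
  suffices hU : PiecewiseSyndetic (⋃ y ∈ Finset.Icc 1 W, {d | ∀ s ∈ S, d + y * s ∈ B}) by
    obtain ⟨y, hy, hB⟩ := exists_of_biUnion _ _ hU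
    exact ⟨y, (Finset.mem_Icc.1 hy).1, hB⟩
  refine ⟨W + k, fun L => ?_⟩
  obtain ⟨a, ha⟩ := hk (L + (W * S.sup id + W))
  refine ⟨a, fun x hax hxL => ?_⟩
  have hc : ∀ m, ∃ f : Fin (k + 1), m ≤ W * S.sup id + W → x + m + f ∈ B := fun m => by
    by_cases hm : m ≤ W * S.sup id + W
    · obtain ⟨f, hf, hmem⟩ := ha (x + m) (by omega) (by omega)
      exact ⟨⟨f, by omega⟩, fun _ => hmem⟩
    · exact ⟨0, fun h => absurd h hm⟩
  choose c hc using hc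
  obtain ⟨y, hy, b, hb, f, hf⟩ := hW c
  refine ⟨b + f, by omega, Set.mem_biUnion hy fun s hs => ?_⟩
  have hys : y * s ≤ W * S.sup id :=
    Nat.mul_le_mul (Finset.mem_Icc.1 hy).2 (Finset.le_sup (f := id) hs)
  have hmem := hc (y * s + b) (by omega)
  rw [hf s hs] at hmem
  rwa [show x + (b + f) + y * s = x + (y * s + b) + f by ring]

end PiecewiseSyndetic

/-- If `χ` has no monochromatic `{x, x + y, x * y}`, then there are arbitrarily large sets `T` of
colors for which some piecewise syndetic `B` lies in a dilate of every color class in `T`. -/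
theorem exists_piecewiseSyndetic_of_no_mono {κ : Type*} [Finite κ] (χ : ℕ → κ)
    (hχ : ∀ x y, 0 < x → 0 < y → χ (x + y) = χ x → χ (x * y) ≠ χ x) (m : ℕ) :
    ∃ (T : Finset κ) (P : κ → ℕ) (B : Set ℕ), T.card = m ∧ PiecewiseSyndetic B ∧
      ∀ c ∈ T, 0 < P c ∧ ∀ z ∈ B, ∃ x, z = P c * x ∧ χ x = c := by
  classical
  have := Fintype.ofFinite κ
  induction m with
  | zero => exact ⟨∅, 0, Set.univ, rfl, .univ, by simp⟩
  | succ m ih =>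
    obtain ⟨T, P, B, hT, hB, hP⟩ := ih
    obtain ⟨y, hy, hD⟩ := hB.exists_homothetic (insert 0 (T.image fun c => P c ^ 2))
    set D := {d | ∀ s ∈ insert 0 (T.image fun c => P c ^ 2), d + y * s ∈ B}
    have hDB : ∀ d ∈ D, d ∈ B := fun d hd => by simpa using hd 0 (by simp)
    obtain ⟨t, -, ht⟩ := PiecewiseSyndetic.exists_of_biUnion Finset.univ
      (fun t => (y * ·) '' D ∩ χ ⁻¹' {t}) (by
        convert hD.image_mul hy using 1
        ext z
        simp)
    have htT : t ∉ T := fun htT => by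
      obtain ⟨_, ⟨⟨d, hd, rfl⟩, hzt⟩, hz⟩ := ht.exists_pos_mem
      obtain ⟨hPt, hPB⟩ := hP t htT
      obtain ⟨x, rfl, hx⟩ := hPB d (hDB d hd)
      obtain ⟨x', hx', hxt⟩ := hPB _ (hd (P t ^ 2)
        (Finset.mem_insert_of_mem (Finset.mem_image_of_mem _ htT)))
      have hxx : x' = x + y * P t := Nat.eq_of_mul_eq_mul_left hPt (by rw [← hx']; ring)
      have hx0 : 0 < x := Nat.pos_of_ne_zero fun h => by simp [h] at hz
      refine hχ x (y * P t) hx0 (Nat.mul_pos hy hPt) (by rw [← hxx, hxt, hx]) ?_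
      rw [show x * (y * P t) = y * (P t * x) by ring, hx]
      exact hzt
    refine ⟨insert t T, fun c => if c = t then 1 else y * P c, _,
      by rw [Finset.card_insert_of_notMem htT, hT], ht, fun c hc => ?_⟩
    by_cases hct : c = t
    · subst hct
      simp only [if_true]
      exact ⟨one_pos, fun z hz => ⟨z, (one_mul z).symm, hz.2⟩⟩
    · obtain ⟨hPc, hPB⟩ := hP c (Finset.mem_of_mem_insert_of_ne hc hct)
      simp only [hct, if_false]
      refine ⟨Nat.mul_pos hy hPc, ?_⟩
      rintro _ ⟨⟨d, hd, rfl⟩, -⟩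
      obtain ⟨x, rfl, hx⟩ := hPB d (hDB d hd)
      exact ⟨x, (mul_assoc _ _ _).symm, hx⟩

theorem exists_mono_add_mul {κ : Type*} [Finite κ] (χ : ℕ → κ) :
    ∃ x y, 0 < x ∧ 0 < y ∧ χ (x + y) = χ x ∧ χ (x * y) = χ x := by
  have := Fintype.ofFinite κ
  by_contra! h
  obtain ⟨T, -, -, hT, -⟩ := exists_piecewiseSyndetic_of_no_mono χ h (Fintype.card κ + 1)
  have := T.card_le_univ
  omega

theorem stmt14 (n : ℕ) (hn : 0 < n) :
    ∃ N : ℕ, 0 < N ∧ ∀ χ : ℕ → Fin n,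
      ∃ x y : ℕ, 0 < x ∧ 0 < y ∧ x ≤ N ∧ x + y ≤ N ∧ x * y ≤ N ∧
        χ (x + y) = χ x ∧ χ (x * y) = χ x := by
  by_contra! h
  choose c hc using fun N : ℕ => h (N + 1) N.succ_pos
  obtain ⟨d, hd⟩ := exists_eventually_eq_hyperfilter c
  obtain ⟨x, y, hx, hy, hadd, hmul⟩ := exists_mono_add_mul d
  obtain ⟨N, h1, h2, h3, h4, h5⟩ := ((hd x).and ((hd (x + y)).and ((hd (x * y)).and
    ((eventually_hyperfilter_ge (x + y)).and (eventually_hyperfilter_ge (x * y)))))).exists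
  exact hc N x y hx hy (by omega) (by omega) (by omega) (by rw [h2, h1, hadd])
    (by rw [h3, h1, hmul])
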